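/- Set q_j = (az_j−a⁻¹z_j⁻¹)/(az_j⁻¹−a⁻¹z_j) for j = 1,…,N, Δ = −(a²+a⁻²)/2, and p′ = −(b+b⁻¹)(a²−a⁻²)/(2(b−b⁻¹)), assuming b² ≠ 1 and az_j⁻¹−a⁻¹z_j ≠ 0 for all j. Then the homogeneous symmetric function factorizes as F_{M,N}(z_1,…,z_N|1,…,1|x_1,…,x_N) = (b−b⁻¹)^N ∏_{1≤j<k≤N} [(a²+a⁻²−z_j²−z_j⁻²)(a²+a⁻²−z_k²−z_k⁻²)] / [(a²−a⁻²)²(z_k²+z_k⁻²−z_j²−z_j⁻²)] × ∏_{j=1}^N [(−a²z_j²+a⁻²z_j⁻²)(a²+a⁻²−z_j²−z_j⁻²)^M / (z_j²−z_j⁻²)] × f_{M,N}, where f_{M,N} = Σ_{σ∈S_N} Σ_{τ∈{±1}^N} sgn(σ)(−1)^{|τ|} ∏_{1≤j<k≤N} (1−2Δ q_{σ(j)}^{τ_{σ(j)}} + q_{σ(j)}^{τ_{σ(j)}} q_{σ(k)}^{−τ_{σ(k)}})(1−2Δ q_{σ(k)}^{τ_{σ(k)}} + q_{σ(j)}^{τ_{σ(j)}}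 q_{σ(k)}^{τ_{σ(k)}}) q_{σ(j)}^{−τ_{σ(j)}} × ∏_{k=1}^N q_{σ(k)}^{−τ_{σ(k)} x_k} (1+(p′−Δ) q_{σ(k)}^{τ_{σ(k)}}), and |τ| denotes the number of indices j with τ_j = −1. -/

import Mathlib

/-!
Write `[x] = x - x⁻¹`. Since `q(u) = [au] / [au⁻¹]`, replacing `z_j` by `z_j⁻¹` inverts `q_j`, so a
sign `τ_j` only changes the argument `u = z_j ^ τ_j`, and every factor of either sum is a function
of such arguments. The identity `x² + x⁻² - y² - y⁻² = [xy][xy⁻¹]` and addition formulas for `[·]`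
then show that each two-body factor of `F` is the corresponding two-body factor of the Bethe
wavefunction times a function of `(z_j, z_k)` which is invariant under `z ↦ z⁻¹` and antisymmetric,
whence `sgn σ`; each one-body factor matches up to `(z² - z⁻²)⁻¹`, which is odd under `z ↦ z⁻¹`,
whence `(-1)^|τ|`. When some `q_j` vanishes, `[az_j] = 0` kills the common prefactor
`-[(az_j)²]` of both sides.
-/

open Finset

def eps {N : ℕ} (τ : Fin N → Bool) (j : Fin N) : ℤ := if τ j then 1 else -1

noncomputable def pairFactor (a Z1 Z2 : ℂ) (t1 t2 : ℤ) : ℂ :=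
  ((a ^ (2:ℤ) * Z1 ^ t1 * Z2 ^ t2 - a ^ (-2:ℤ) * Z1 ^ (-t1) * Z2 ^ (-t2)) *
   (a ^ (2:ℤ) * Z1 ^ (-t1) * Z2 ^ t2 - a ^ (-2:ℤ) * Z1 ^ t1 * Z2 ^ (-t2))) /
  ((Z1 ^ t1 * Z2 ^ t2 - Z1 ^ (-t1) * Z2 ^ (-t2)) *
   (Z1 ^ (-t1) * Z2 ^ t2 - Z1 ^ t1 * Z2 ^ (-t2)))

/-- The symmetric function `F_{M,N}(z_1,…,z_N|w_1,…,w_M|x_1,…,x_N)`,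
where `x k` for `k = 0,…,N-1` encodes `x_{k+1}`. -/
noncomputable def FF (a b : ℂ) (M N : ℕ) (z : Fin N → ℂ) (w : Fin M → ℂ) (x : ℕ → ℕ) : ℂ :=
  (a ^ (2:ℤ) - a ^ (-2:ℤ)) ^ N *
  (∏ j, (-(a ^ (2:ℤ) * z j ^ (2:ℤ)) + a ^ (-2:ℤ) * z j ^ (-2:ℤ))) *
  ∑ σ : Equiv.Perm (Fin N), ∑ τ : Fin N → Bool,
    (∏ j, (z j ^ (2 * eps τ j) - z j ^ (-(2 * eps τ j)))⁻¹) *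
    (∏ p ∈ Finset.univ.filter (fun p : Fin N × Fin N => p.1 < p.2),
      pairFactor a (z (σ p.1)) (z (σ p.2)) (eps τ (σ p.1)) (eps τ (σ p.2))) *
    (∏ k, (b * a⁻¹ * z (σ k) ^ (-(eps τ (σ k))) - b⁻¹ * a * z (σ k) ^ (eps τ (σ k)))) *
    (∏ k, ∏ j : Fin M, (a * z (σ k) ^ (-(eps τ (σ k))) - a⁻¹ * z (σ k) ^ (eps τ (σ k)) * w j)) *
    (∏ k : Fin N, ∏ j ∈ Finset.univ.filter (fun j : Fin M => (j : ℕ) + 1 < x k.val),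
      (a * z (σ k) ^ (-(eps τ (σ k))) * w j - a⁻¹ * z (σ k) ^ (eps τ (σ k)))) *
    (∏ k : Fin N, ∏ j ∈ Finset.univ.filter (fun j : Fin M => x k.val ≤ (j : ℕ)),
      (a * z (σ k) ^ (eps τ (σ k)) - a⁻¹ * z (σ k) ^ (-(eps τ (σ k))) * w j))

/-- The dual symmetric function `F̄_{M,N}(z_1,…,z_N|w_1,…,w_M|x̄_1,…,x̄_N)`. -/
noncomputable def FBar (a b : ℂ) (M N : ℕ) (z : Fin N → ℂ) (w : Fin M → ℂ) (x : ℕ → ℕ) : ℂ :=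
  (a ^ (2:ℤ) - a ^ (-2:ℤ)) ^ N *
  (∏ j, (-(a ^ (2:ℤ) * z j ^ (2:ℤ)) + a ^ (-2:ℤ) * z j ^ (-2:ℤ))) *
  ∑ σ : Equiv.Perm (Fin N), ∑ τ : Fin N → Bool,
    (∏ j, (z j ^ (2 * eps τ j) - z j ^ (-(2 * eps τ j)))⁻¹) *
    (∏ p ∈ Finset.univ.filter (fun p : Fin N × Fin N => p.1 < p.2),
      pairFactor a (z (σ p.1)) (z (σ p.2)) (eps τ (σ p.1)) (eps τ (σ p.2))) *
    (∏ k, (b * a * z (σ k) ^ (eps τ (σ k)) - b⁻¹ * a⁻¹ * z (σ k) ^ (-(eps τ (σ k))))) *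
    (∏ k, ∏ j : Fin M, (a * z (σ k) ^ (-(eps τ (σ k))) * w j - a⁻¹ * z (σ k) ^ (eps τ (σ k)))) *
    (∏ k : Fin N, ∏ j ∈ Finset.univ.filter (fun j : Fin M => (j : ℕ) + 1 < x k.val),
      (a * z (σ k) ^ (-(eps τ (σ k))) - a⁻¹ * z (σ k) ^ (eps τ (σ k)) * w j)) *
    (∏ k : Fin N, ∏ j ∈ Finset.univ.filter (fun j : Fin M => x k.val ≤ (j : ℕ)),
      (a * z (σ k) ^ (eps τ (σ k)) * w j - a⁻¹ * z (σ k) ^ (-(eps τ (σ k)))))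

/-- `xfun T k` is the `(k+1)`-st smallest element of `T`, in 1-based labelling. -/
def xfun {M : ℕ} (T : Finset (Fin M)) (k : ℕ) : ℕ :=
  ((T.sort (· ≤ ·)).map (fun j : Fin M => (j : ℕ) + 1)).getD k 0

/-- `q_j = (az_j − a⁻¹z_j⁻¹)/(az_j⁻¹ − a⁻¹z_j)`, the Bethe-ansatz momentum variable
`e^{iK_j}`. -/
noncomputable def qq (a z : ℂ) : ℂ := (a * z - a⁻¹ * z⁻¹) / (a * z⁻¹ - a⁻¹ * z)

/-- The anisotropy parameter `Δ = −(a²+a⁻²)/2` of the open XXZ chain. -/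
noncomputable def Delta (a : ℂ) : ℂ := -((a ^ (2:ℤ) + a ^ (-2:ℤ)) / 2)

/-- The boundary parameter `p′ = −(b+b⁻¹)(a²−a⁻²)/(2(b−b⁻¹))` of the open XXZ chain. -/
noncomputable def pprime (a b : ℂ) : ℂ :=
  -((b + b⁻¹) * (a ^ (2:ℤ) - a ^ (-2:ℤ)) / (2 * (b - b⁻¹)))

/-- The coordinate Bethe ansatz wavefunction `f_{M,N}(K_1,…,K_N|x_1,…,x_N)` of
Alcaraz-Barber-Batchelor-Baxter-Quispel for the open XXZ chain, written in the
variables `q_j = e^{iK_j}`; `(−1)^{|τ|}` is the sign coming from the number of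
negated momenta. -/
noncomputable def fABBBQ (a b : ℂ) (N : ℕ) (z : Fin N → ℂ) (x : ℕ → ℕ) : ℂ :=
  ∑ σ : Equiv.Perm (Fin N), ∑ τ : Fin N → Bool,
    ((Equiv.Perm.sign σ : ℤ) : ℂ) *
    (-1 : ℂ) ^ (Finset.univ.filter (fun j => τ j = false)).card *
    (∏ p ∈ Finset.univ.filter (fun p : Fin N × Fin N => p.1 < p.2),
      (1 - 2 * Delta a * qq a (z (σ p.1)) ^ eps τ (σ p.1)
          + qq a (z (σ p.1)) ^ eps τ (σ p.1) * qq a (z (σ p.2)) ^ (-(eps τ (σ p.2)))) *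
      (1 - 2 * Delta a * qq a (z (σ p.2)) ^ eps τ (σ p.2)
          + qq a (z (σ p.1)) ^ eps τ (σ p.1) * qq a (z (σ p.2)) ^ eps τ (σ p.2)) *
      qq a (z (σ p.1)) ^ (-(eps τ (σ p.1)))) *
    (∏ k : Fin N,
      qq a (z (σ k)) ^ (-(eps τ (σ k)) * (x k.val : ℤ)) *
      (1 + (pprime a b - Delta a) * qq a (z (σ k)) ^ eps τ (σ k)))

section Bracket

variable {K : Type*} [Field K]

/-- The bracket `[x] = x - x⁻¹`, through which all factors of `F` and of the Bethe wavefunction are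
expressed. -/
def bracket (x : K) : K := x - x⁻¹

/-- The difference `x² + x⁻² - y² - y⁻²`; integer exponents as in `FF`. -/
def gap (x y : K) : K := x ^ (2:ℤ) + x ^ (-2:ℤ) - y ^ (2:ℤ) - y ^ (-2:ℤ)

lemma bracket_inv (x : K) : bracket x⁻¹ = -bracket x := by
  rw [bracket, bracket, inv_inv, neg_sub]

lemma bracket_div (x y : K) : bracket (x / y) = x * y⁻¹ - x⁻¹ * y := by
  rw [bracket, div_eq_mul_inv, mul_inv, inv_inv]

lemma bracket_ne_zero {x : K} (hx : x ≠ 0) (hx2 : x ^ 2 ≠ 1) : bracket x ≠ 0 := fun h =>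
  hx2 (by rw [sq, mul_eq_one_iff_eq_inv₀ hx]; exact sub_eq_zero.mp h)

lemma bracket_sq (x : K) : bracket (x ^ 2) = bracket x * (x + x⁻¹) := by
  simp only [bracket]
  ring

lemma zpow_two_sub_zpow_neg_two (x : K) : x ^ (2:ℤ) - x ^ (-2:ℤ) = bracket (x ^ 2) := by
  rw [bracket, zpow_neg]
  norm_cast

lemma gap_inv_left (x y : K) : gap x⁻¹ y = gap x y := by
  simp only [gap, inv_zpow', neg_neg]
  ring

lemma gap_inv_right (x y : K) : gap x y⁻¹ = gap x y := by
  simp only [gap, inv_zpow', neg_neg]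
  ring

lemma gap_swap (x y : K) : gap x y = -gap y x := by
  simp only [gap]
  ring

lemma gap_eq_bracket_mul_bracket {x y : K} (hx : x ≠ 0) (hy : y ≠ 0) :
    gap x y = bracket (x * y) * bracket (x / y) := by
  simp only [gap, bracket]
  field_simp
  ring

lemma bracket_two_body {a u v : K} (ha : a ≠ 0) (hu : u ≠ 0) (hv : v ≠ 0) :
    bracket (a / u) * bracket (a * v) +
        (a ^ 2 + (a ^ 2)⁻¹) * (bracket (a * u) * bracket (a * v)) +
        bracket (a * u) * bracket (a / v) =
      bracket (a ^ 2) * bracket (a ^ 2 * (u * v)) := by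
  simp only [bracket]
  field_simp
  ring

lemma bracket_one_body {a b u : K} (ha : a ≠ 0) (hb : b ≠ 0) (hu : u ≠ 0) :
    bracket b * bracket (a / u) + bracket (b / a ^ 2) * bracket (a * u) =
      bracket (a ^ 2) * bracket (b / a / u) := by
  simp only [bracket]
  field_simp
  ring

end Bracket

lemma qq_eq_bracket_div_bracket (a u : ℂ) :
    qq a u = bracket (a * u) / bracket (a / u) := by
  rw [qq, bracket_div, bracket, mul_inv]

lemma qq_inv (a u : ℂ) : qq a u⁻¹ = (qq a u)⁻¹ := by
  rw [qq, qq, inv_div, inv_inv]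

lemma bracket_mul_pprime_sub_Delta {b : ℂ} (a : ℂ) (hb : bracket b ≠ 0) :
    bracket b * (pprime a b - Delta a) = bracket (b / a ^ 2) := by
  have hp : bracket b * pprime a b = -((b + b⁻¹) * bracket (a ^ 2) / 2) := by
    rw [pprime, zpow_two_sub_zpow_neg_two, ← bracket]
    field_simp
  rw [mul_sub, hp, Delta, zpow_neg, bracket_div]
  simp only [bracket]
  norm_cast
  ring

lemma neg_sq_add_zpow_neg_two_eq_zero {a z : ℂ} (h : bracket (a * z) = 0) :
    -(a ^ (2:ℤ) * z ^ (2:ℤ)) + a ^ (-2:ℤ) * z ^ (-2:ℤ) = 0 := by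
  rw [← mul_zpow, ← mul_zpow, neg_add_eq_zero, ← sub_eq_zero, zpow_two_sub_zpow_neg_two,
    bracket_sq, h, zero_mul]

/-- The two-body factor of the Bethe wavefunction for momentum variables `q₁ = e^{iK₁}` and
`q₂ = e^{iK₂}`. -/
noncomputable def betheAmplitude (a q₁ q₂ : ℂ) : ℂ :=
  (1 - 2 * Delta a * q₁ + q₁ * q₂⁻¹) * (1 - 2 * Delta a * q₂ + q₁ * q₂) * q₁⁻¹

/-- The one-body factor of the Bethe wavefunction for a particle at site `x` with momentum variable
`q = e^{iK}`, including the boundary term. -/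
noncomputable def betheSiteFactor (a b : ℂ) (x : ℕ) (q : ℂ) : ℂ :=
  q ^ (-(x : ℤ)) * (1 + (pprime a b - Delta a) * q)

/-- The ratio between the two-body factors of `F` and of the Bethe wavefunction; integer exponents
as in the factorization formula. -/
noncomputable def pairPrefactor (a u v : ℂ) : ℂ :=
  gap a u * gap a v / ((a ^ (2:ℤ) - a ^ (-2:ℤ)) ^ 2 * gap v u)

/-- The one-body factor of the homogeneous limit of `F` for a particle at site `x`, as a function of
`u = z ^ τ`. -/
noncomputable def siteFactor (a b : ℂ) (M x : ℕ) (u : ℂ) : ℂ :=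
  (bracket (u ^ 2))⁻¹ * bracket (b / a / u) *
    bracket (a / u) ^ M * bracket (a / u) ^ (x - 1) * bracket (a * u) ^ (M - x)

lemma pairPrefactor_swap (a u v : ℂ) : pairPrefactor a u v = -pairPrefactor a v u := by
  rw [pairPrefactor, pairPrefactor, gap_swap v u, mul_neg, div_neg, mul_comm (gap a u)]

lemma pairFactor_eq_pairFactor_zpow (a u v : ℂ) (s t : ℤ) :
    pairFactor a u v s t = pairFactor a (u ^ s) (v ^ t) 1 1 := by
  simp only [pairFactor, zpow_neg, zpow_one]

lemma pairFactor_one_one (a u v : ℂ) :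
    pairFactor a u v 1 1 =
      bracket (a ^ 2 * (u * v)) * bracket (a ^ 2 * (v / u)) /
        (bracket (v * u) * bracket (v / u)) := by
  simp only [pairFactor, bracket, zpow_neg, zpow_one, mul_inv, div_eq_mul_inv, inv_inv]
  norm_cast
  ring_nf

lemma one_sub_two_mul_Delta_mul_qq_add {a u v : ℂ} (ha : a ≠ 0) (hu : u ≠ 0) (hv : v ≠ 0)
    (hau : bracket (a / u) ≠ 0) (hav : bracket (a * v) ≠ 0) :
    1 - 2 * Delta a * qq a u + qq a u * (qq a v)⁻¹ =
      bracket (a ^ 2) * bracket (a ^ 2 * (u * v)) / (bracket (a / u) * bracket (a * v)) := by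
  have hDelta : 2 * Delta a = -(a ^ 2 + (a ^ 2)⁻¹) := by
    rw [Delta, zpow_neg]
    norm_cast
    ring
  rw [← bracket_two_body ha hu hv, hDelta, qq_eq_bracket_div_bracket, qq_eq_bracket_div_bracket,
    inv_div]
  field_simp
  ring

-- The second factor of the amplitude is the first one at `(v, u⁻¹)`.
lemma betheAmplitude_qq {a u v : ℂ} (ha : a ≠ 0) (hu : u ≠ 0) (hv : v ≠ 0)
    (hau : gap a u ≠ 0) (hav : gap a v ≠ 0) :
    betheAmplitude a (qq a u) (qq a v) =
      bracket (a ^ 2) ^ 2 * (bracket (a ^ 2 * (u * v)) * bracket (a ^ 2 * (v / u))) /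
        (gap a u * gap a v) := by
  rw [gap_eq_bracket_mul_bracket ha hu] at hau ⊢
  rw [gap_eq_bracket_mul_bracket ha hv] at hav ⊢
  obtain ⟨hu₁, hu₂⟩ := mul_ne_zero_iff.mp hau
  obtain ⟨hv₁, hv₂⟩ := mul_ne_zero_iff.mp hav
  have hsecond := one_sub_two_mul_Delta_mul_qq_add ha hv (inv_ne_zero hu) hv₂ hu₂
  rw [qq_inv, inv_inv, mul_comm (qq a v), ← div_eq_mul_inv, ← div_eq_mul_inv] at hsecond
  rw [betheAmplitude, one_sub_two_mul_Delta_mul_qq_add ha hu hv hu₂ hv₁, hsecond,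
    qq_eq_bracket_div_bracket, inv_div]
  field_simp

lemma pairFactor_one_one_eq_pairPrefactor_mul {a u v : ℂ} (ha : a ≠ 0) (ha4 : a ^ 4 ≠ 1)
    (hu : u ≠ 0) (hv : v ≠ 0) (hau : gap a u ≠ 0) (hav : gap a v ≠ 0) :
    pairFactor a u v 1 1 = pairPrefactor a u v * betheAmplitude a (qq a u) (qq a v) := by
  have ha2 : bracket (a ^ 2) ≠ 0 :=
    bracket_ne_zero (pow_ne_zero 2 ha) (by rwa [← pow_mul])
  rw [pairFactor_one_one, betheAmplitude_qq ha hu hv hau hav, pairPrefactor,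
    zpow_two_sub_zpow_neg_two, gap_eq_bracket_mul_bracket hv hu]
  field_simp

lemma siteFactor_eq_betheSiteFactor {a b u : ℂ} {M x : ℕ} (ha : a ≠ 0) (hb : b ≠ 0)
    (hb2 : b ^ 2 ≠ 1) (hu : u ≠ 0) (hau : gap a u ≠ 0) (hx1 : 1 ≤ x) (hxM : x ≤ M) :
    bracket (a ^ 2) * siteFactor a b M x u =
      bracket b * (gap a u ^ M / bracket (u ^ 2)) * betheSiteFactor a b x (qq a u) := by
  rw [gap_eq_bracket_mul_bracket ha hu] at hau ⊢
  obtain ⟨hnum, hden⟩ := mul_ne_zero_iff.mp hau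
  have hboundary : bracket (a ^ 2) * bracket (b / a / u) =
      bracket b * (1 + (pprime a b - Delta a) * qq a u) * bracket (a / u) := by
    rw [← bracket_one_body ha hb hu, ← bracket_mul_pprime_sub_Delta a (bracket_ne_zero hb hb2),
      qq_eq_bracket_div_bracket]
    field_simp
  have hpos : bracket (a / u) ^ (x - 1) * bracket (a / u) * bracket (a * u) ^ (M - x) =
      bracket (a * u) ^ M * qq a u ^ (-(x : ℤ)) := by
    rw [pow_sub_one_mul (by lia), pow_sub₀ _ hnum hxM, qq_eq_bracket_div_bracket, zpow_neg,
      zpow_natCast, div_pow, inv_div]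
    ring
  calc bracket (a ^ 2) * siteFactor a b M x u
      = (bracket (u ^ 2))⁻¹ * (bracket (a ^ 2) * bracket (b / a / u)) *
          bracket (a / u) ^ M * (bracket (a / u) ^ (x - 1) * bracket (a * u) ^ (M - x)) := by
        rw [siteFactor]
        ring
    _ = (bracket (u ^ 2))⁻¹ * (bracket b * (1 + (pprime a b - Delta a) * qq a u)) *
          bracket (a / u) ^ M *
          (bracket (a / u) ^ (x - 1) * bracket (a / u) * bracket (a * u) ^ (M - x)) := by
        rw [hboundary]
        ring
    _ = bracket b * ((bracket (a * u) * bracket (a / u)) ^ M / bracket (u ^ 2)) *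
          betheSiteFactor a b x (qq a u) := by
        rw [hpos, betheSiteFactor]
        ring

section Signs

variable {N : ℕ} (τ : Fin N → Bool) (j : Fin N)

lemma eps_eq_one_or_neg_one : eps τ j = 1 ∨ eps τ j = -1 := by
  unfold eps
  split_ifs <;> simp

lemma zpow_eps_eq_or_inv {K : Type*} [DivisionRing K] (u : K) :
    u ^ eps τ j = u ∨ u ^ eps τ j = u⁻¹ := by
  rcases eps_eq_one_or_neg_one τ j with h | h <;> simp [h]

lemma qq_zpow_eps (a u : ℂ) : qq a (u ^ eps τ j) = qq a u ^ eps τ j := by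
  rcases eps_eq_one_or_neg_one τ j with h | h <;> simp [h, qq_inv]

lemma gap_zpow_eps_left {K : Type*} [Field K] (x y : K) : gap (x ^ eps τ j) y = gap x y := by
  rcases zpow_eps_eq_or_inv τ j x with h | h <;> simp [h, gap_inv_left]

lemma gap_zpow_eps_right {K : Type*} [Field K] (x y : K) : gap x (y ^ eps τ j) = gap x y := by
  rcases zpow_eps_eq_or_inv τ j y with h | h <;> simp [h, gap_inv_right]

lemma inv_bracket_zpow_eps_sq {K : Type*} [Field K] (u : K) :
    (bracket ((u ^ eps τ j) ^ 2))⁻¹ = (eps τ j : K) * (bracket (u ^ 2))⁻¹ := by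
  rcases eps_eq_one_or_neg_one τ j with h | h <;> simp [h, bracket_inv, inv_neg]

lemma neg_one_pow_card_filter_eq_prod_eps {R : Type*} [CommRing R] :
    (-1 : R) ^ #{j | τ j = false} = ∏ j, (eps τ j : R) := by
  rw [← prod_const, prod_filter]
  refine prod_congr rfl fun j _ => ?_
  cases h : τ j <;> simp [eps, h]

end Signs

section Sums

variable {N : ℕ}

lemma card_filter_val_add_one_lt (M x : ℕ) :
    #{j : Fin M | (j : ℕ) + 1 < x} = min M (x - 1) := by
  simp only [← Nat.lt_sub_iff_add_lt, Fin.card_filter_val_lt]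

lemma card_filter_le_val (M x : ℕ) : #{j : Fin M | x ≤ (j : ℕ)} = M - x := by
  have h := card_filter_add_card_filter_not (s := (univ : Finset (Fin M))) fun j => (j : ℕ) < x
  simp only [Fin.card_filter_val_lt, not_lt, card_univ, Fintype.card_fin] at h
  lia

lemma prod_filter_lt_eq_prod_Iio {R : Type*} [CommMonoid R] (f : Fin N → Fin N → R) :
    ∏ p : Fin N × Fin N with p.1 < p.2, f p.1 p.2 = ∏ j, ∏ i ∈ Iio j, f i j := by
  rw [prod_filter, Fintype.prod_prod_type, prod_comm]
  refine prod_congr rfl fun j _ => ?_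
  rw [← prod_filter, filter_gt_eq_Iio]

lemma prod_filter_lt_comp_perm_eq_sign_mul {R : Type*} [CommRing R] {f : Fin N → Fin N → R}
    (hf : ∀ i j, f i j = -f j i) (σ : Equiv.Perm (Fin N)) :
    ∏ p : Fin N × Fin N with p.1 < p.2, f (σ p.1) (σ p.2) =
      ((Equiv.Perm.sign σ : ℤ) : R) * ∏ p : Fin N × Fin N with p.1 < p.2, f p.1 p.2 := by
  rw [prod_filter_lt_eq_prod_Iio, prod_filter_lt_eq_prod_Iio fun i j => f (σ i) (σ j)]
  exact σ.prod_Iio_comp_eq_sign_mul_prod hf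

lemma prod_pairFactor_eq_sign_mul {a : ℂ} {z : Fin N → ℂ} (ha : a ≠ 0) (ha4 : a ^ 4 ≠ 1)
    (hz : ∀ j, z j ≠ 0) (hgap : ∀ j, gap a (z j) ≠ 0) (σ : Equiv.Perm (Fin N))
    (τ : Fin N → Bool) :
    ∏ p : Fin N × Fin N with p.1 < p.2,
        pairFactor a (z (σ p.1)) (z (σ p.2)) (eps τ (σ p.1)) (eps τ (σ p.2)) =
      ((Equiv.Perm.sign σ : ℤ) : ℂ) *
        (∏ p : Fin N × Fin N with p.1 < p.2, pairPrefactor a (z p.1) (z p.2)) *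
        ∏ p : Fin N × Fin N with p.1 < p.2,
          betheAmplitude a (qq a (z (σ p.1)) ^ eps τ (σ p.1))
            (qq a (z (σ p.2)) ^ eps τ (σ p.2)) := by
  rw [← prod_filter_lt_comp_perm_eq_sign_mul (f := fun i j => pairPrefactor a (z i) (z j))
    (fun i j => pairPrefactor_swap a _ _) σ, ← prod_mul_distrib]
  refine prod_congr rfl fun p _ => ?_
  rw [pairFactor_eq_pairFactor_zpow, pairFactor_one_one_eq_pairPrefactor_mul ha ha4
    (zpow_ne_zero _ (hz _)) (zpow_ne_zero _ (hz _)) (by rw [gap_zpow_eps_right]; exact hgap _)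
    (by rw [gap_zpow_eps_right]; exact hgap _)]
  simp only [pairPrefactor, gap_zpow_eps_left, gap_zpow_eps_right, qq_zpow_eps]

lemma prod_siteFactor_eq_prod_eps_mul {a b : ℂ} {M : ℕ} {z : Fin N → ℂ} {x : ℕ → ℕ}
    (ha : a ≠ 0) (hb : b ≠ 0) (hb2 : b ^ 2 ≠ 1) (hz : ∀ j, z j ≠ 0)
    (hgap : ∀ j, gap a (z j) ≠ 0) (hx1 : ∀ k : Fin N, 1 ≤ x k) (hxM : ∀ k : Fin N, x k ≤ M)
    (σ : Equiv.Perm (Fin N)) (τ : Fin N → Bool) :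
    bracket (a ^ 2) ^ N * ∏ k : Fin N, siteFactor a b M (x k) (z (σ k) ^ eps τ (σ k)) =
      bracket b ^ N * (∏ j, gap a (z j) ^ M / bracket (z j ^ 2)) * (∏ j, (eps τ j : ℂ)) *
        ∏ k : Fin N, betheSiteFactor a b (x k) (qq a (z (σ k)) ^ eps τ (σ k)) := by
  rw [← Equiv.prod_comp σ fun j => gap a (z j) ^ M / bracket (z j ^ 2),
    ← Equiv.prod_comp σ fun j => (eps τ j : ℂ), ← Fin.prod_const N (bracket _),
    ← Fin.prod_const N (bracket _)]
  simp only [← prod_mul_distrib]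
  refine prod_congr rfl fun k _ => ?_
  rw [siteFactor_eq_betheSiteFactor ha hb hb2 (zpow_ne_zero _ (hz _))
    (by rw [gap_zpow_eps_right]; exact hgap _) (hx1 k) (hxM k), qq_zpow_eps, gap_zpow_eps_right,
    div_eq_mul_inv, inv_bracket_zpow_eps_sq]
  ring

lemma FF_one_eq_sum {M : ℕ} (a b : ℂ) (z : Fin N → ℂ) {x : ℕ → ℕ}
    (hxM : ∀ k : Fin N, x k ≤ M) :
    FF a b M N z (fun _ => 1) x =
      bracket (a ^ 2) ^ N *
        (∏ j, (-(a ^ (2:ℤ) * z j ^ (2:ℤ)) + a ^ (-2:ℤ) * z j ^ (-2:ℤ))) *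
        ∑ σ : Equiv.Perm (Fin N), ∑ τ : Fin N → Bool,
          (∏ k : Fin N, siteFactor a b M (x k) (z (σ k) ^ eps τ (σ k))) *
            ∏ p : Fin N × Fin N with p.1 < p.2,
              pairFactor a (z (σ p.1)) (z (σ p.2)) (eps τ (σ p.1)) (eps τ (σ p.2)) := by
  have hcard (k : Fin N) : #{j : Fin M | (j : ℕ) + 1 < x k} = x k - 1 := by
    rw [card_filter_val_add_one_lt]
    have := hxM k
    lia
  rw [FF, zpow_two_sub_zpow_neg_two]
  congr 1
  refine sum_congr rfl fun σ _ => sum_congr rfl fun τ _ => ?_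
  rw [← Equiv.prod_comp σ fun j => (z j ^ (2 * eps τ j) - z j ^ (-(2 * eps τ j)))⁻¹]
  simp only [siteFactor, bracket, prod_mul_distrib, prod_const, hcard, card_filter_le_val,
    card_univ, Fintype.card_fin, div_eq_mul_inv, mul_inv, inv_inv, zpow_neg, zpow_mul',
    zpow_ofNat, mul_one]
  ring

lemma fABBBQ_eq_sum (a b : ℂ) (z : Fin N → ℂ) (x : ℕ → ℕ) :
    fABBBQ a b N z x =
      ∑ σ : Equiv.Perm (Fin N), ∑ τ : Fin N → Bool,
        ((Equiv.Perm.sign σ : ℤ) : ℂ) * (∏ j, (eps τ j : ℂ)) *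
          (∏ p : Fin N × Fin N with p.1 < p.2,
            betheAmplitude a (qq a (z (σ p.1)) ^ eps τ (σ p.1))
              (qq a (z (σ p.2)) ^ eps τ (σ p.2))) *
          ∏ k : Fin N, betheSiteFactor a b (x k) (qq a (z (σ k)) ^ eps τ (σ k)) := by
  simp only [fABBBQ, neg_one_pow_card_filter_eq_prod_eps, betheAmplitude, betheSiteFactor,
    ← zpow_neg, ← zpow_mul, neg_mul, mul_neg]

end Sums

lemma FF_eq_zero_of_bracket_eq_zero {a : ℂ} {N : ℕ} {z : Fin N → ℂ} {j : Fin N}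
    (hj : bracket (a * z j) = 0) (b : ℂ) (M : ℕ) (w : Fin M → ℂ) (x : ℕ → ℕ) :
    FF a b M N z w x = 0 := by
  rw [FF, prod_eq_zero (mem_univ j) (neg_sq_add_zpow_neg_two_eq_zero hj), mul_zero, zero_mul]

lemma FF_one_eq_prod_mul_fABBBQ {a b : ℂ} {M N : ℕ} {z : Fin N → ℂ} {x : ℕ → ℕ} (ha : a ≠ 0)
    (hb : b ≠ 0) (ha4 : a ^ 4 ≠ 1) (hb2 : b ^ 2 ≠ 1) (hz : ∀ j, z j ≠ 0)
    (hgap : ∀ j, gap a (z j) ≠ 0) (hx1 : ∀ k : Fin N, 1 ≤ x k) (hxM : ∀ k : Fin N, x k ≤ M) :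
    FF a b M N z (fun _ => 1) x =
      bracket b ^ N *
        (∏ p : Fin N × Fin N with p.1 < p.2, pairPrefactor a (z p.1) (z p.2)) *
        (∏ j, (-(a ^ (2:ℤ) * z j ^ (2:ℤ)) + a ^ (-2:ℤ) * z j ^ (-2:ℤ)) * gap a (z j) ^ M /
          (z j ^ (2:ℤ) - z j ^ (-2:ℤ))) *
        fABBBQ a b N z x := by
  rw [FF_one_eq_sum a b z hxM, fABBBQ_eq_sum]
  simp only [zpow_two_sub_zpow_neg_two, mul_div_assoc, prod_mul_distrib, mul_sum]
  refine sum_congr rfl fun σ _ => sum_congr rfl fun τ _ => ?_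
  rw [mul_mul_mul_comm, prod_siteFactor_eq_prod_eps_mul ha hb hb2 hz hgap hx1 hxM,
    prod_pairFactor_eq_sign_mul ha ha4 hz hgap]
  ring

theorem F_homogeneous_eq_ABBBQ_general (a b : ℂ) (M N : ℕ)
    (z : Fin N → ℂ) (x : ℕ → ℕ)
    (ha : a ≠ 0) (hb : b ≠ 0) (ha4 : a ^ 4 ≠ 1) (hb2 : b ^ 2 ≠ 1)
    (hz : ∀ j, z j ≠ 0) (_hz4 : ∀ j, z j ^ 4 ≠ 1)
    (_hzz : ∀ j k, j ≠ k → z j ^ 2 * z k ^ 2 ≠ 1)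
    (_hzz' : ∀ j k, j ≠ k → z j ^ 2 ≠ z k ^ 2)
    (hden : ∀ j, a * (z j)⁻¹ - a⁻¹ * z j ≠ 0)
    (hx1 : ∀ k : Fin N, 1 ≤ x k.val) (hxM : ∀ k : Fin N, x k.val ≤ M) :
    FF a b M N z (fun _ => (1 : ℂ)) x
    = (b - b⁻¹) ^ N *
      (∏ p ∈ Finset.univ.filter (fun p : Fin N × Fin N => p.1 < p.2),
        ((a ^ (2:ℤ) + a ^ (-2:ℤ) - z p.1 ^ (2:ℤ) - z p.1 ^ (-2:ℤ)) *
         (a ^ (2:ℤ) + a ^ (-2:ℤ) - z p.2 ^ (2:ℤ) - z p.2 ^ (-2:ℤ))) /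
        ((a ^ (2:ℤ) - a ^ (-2:ℤ)) ^ 2 *
         (z p.2 ^ (2:ℤ) + z p.2 ^ (-2:ℤ) - z p.1 ^ (2:ℤ) - z p.1 ^ (-2:ℤ)))) *
      (∏ j, (-(a ^ (2:ℤ) * z j ^ (2:ℤ)) + a ^ (-2:ℤ) * z j ^ (-2:ℤ)) *
        (a ^ (2:ℤ) + a ^ (-2:ℤ) - z j ^ (2:ℤ) - z j ^ (-2:ℤ)) ^ M /
        (z j ^ (2:ℤ) - z j ^ (-2:ℤ))) *
      fABBBQ a b N z x := by
  by_cases hbr : ∀ j, bracket (a * z j) ≠ 0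
  · have hgap (j : Fin N) : gap a (z j) ≠ 0 := by
      rw [gap_eq_bracket_mul_bracket ha (hz j), bracket_div]
      exact mul_ne_zero (hbr j) (hden j)
    exact FF_one_eq_prod_mul_fABBBQ ha hb ha4 hb2 hz hgap hx1 hxM
  · obtain ⟨j, hj⟩ := not_forall_not.mp hbr
    have hprefactor := neg_sq_add_zpow_neg_two_eq_zero hj
    rw [FF_eq_zero_of_bracket_eq_zero hj, prod_eq_zero (mem_univ j), mul_zero, zero_mul]
    rw [hprefactor, zero_mul, zero_div]

/-- Equation (5.13): the homogeneous limit `w_1 = ⋯ = w_M = 1` of the symmetric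
function `F_{M,N}` factorizes into explicit prefactors times the coordinate Bethe
ansatz wavefunction of the open XXZ chain of
Alcaraz-Barber-Batchelor-Baxter-Quispel. -/
theorem F_homogeneous_eq_ABBBQ (a b : ℂ) (M N : ℕ)
    (z : Fin N → ℂ) (x : ℕ → ℕ)
    (ha : a ≠ 0) (hb : b ≠ 0) (ha4 : a ^ 4 ≠ 1) (hb2 : b ^ 2 ≠ 1)
    (hz : ∀ j, z j ≠ 0) (hz4 : ∀ j, z j ^ 4 ≠ 1)
    (hzz : ∀ j k, j ≠ k → z j ^ 2 * z k ^ 2 ≠ 1)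
    (hzz' : ∀ j k, j ≠ k → z j ^ 2 ≠ z k ^ 2)
    (hden : ∀ j, a * (z j)⁻¹ - a⁻¹ * z j ≠ 0)
    (hx1 : ∀ k : Fin N, 1 ≤ x k.val) (hxM : ∀ k : Fin N, x k.val ≤ M)
    (hmono : ∀ j k : Fin N, j < k → x j.val < x k.val) :
    FF a b M N z (fun _ => (1 : ℂ)) x
    = (b - b⁻¹) ^ N *
      (∏ p ∈ Finset.univ.filter (fun p : Fin N × Fin N => p.1 < p.2),
        ((a ^ (2:ℤ) + a ^ (-2:ℤ) - z p.1 ^ (2:ℤ) - z p.1 ^ (-2:ℤ)) *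
         (a ^ (2:ℤ) + a ^ (-2:ℤ) - z p.2 ^ (2:ℤ) - z p.2 ^ (-2:ℤ))) /
        ((a ^ (2:ℤ) - a ^ (-2:ℤ)) ^ 2 *
         (z p.2 ^ (2:ℤ) + z p.2 ^ (-2:ℤ) - z p.1 ^ (2:ℤ) - z p.1 ^ (-2:ℤ)))) *
      (∏ j, (-(a ^ (2:ℤ) * z j ^ (2:ℤ)) + a ^ (-2:ℤ) * z j ^ (-2:ℤ)) *
        (a ^ (2:ℤ) + a ^ (-2:ℤ) - z j ^ (2:ℤ) - z j ^ (-2:ℤ)) ^ M /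
        (z j ^ (2:ℤ) - z j ^ (-2:ℤ))) *
      fABBBQ a b N z x :=
  F_homogeneous_eq_ABBBQ_general a b M N z x ha hb ha4 hb2 hz hz4 hzz hzz' hden hx1 hxM
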